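/- Let C be a fusion category over a commutative ring k, I a representative set of its simple objects, and T : C → C a k-linear functor. Then T is centralizable: for every object X of C, the functor C^op × C → C, (Y₁,Y₂) ↦ T(Y₁)* ⊗ X ⊗ Y₂, has a coend Z_T(X) = ⊕_{i∈I} T(i)* ⊗ X ⊗ i, whose universal dinatural transformation is ρ_{X,Y} = Σ_β ι_{i_β} ∘ (T(q_Y^β)* ⊗ id_X ⊗ p_Y^β) : T(Y)* ⊗ X ⊗ Y → Z_T(X) for any I-partition (p_Y^β : Y → i_β, q_Y^β : i_β → Y)_β of Y, where ι_i is the inclusion of the summand T(i)* ⊗ X ⊗ i. -/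

import Mathlib

open CategoryTheory CategoryTheory.Limits MonoidalCategory

universe v u w

/-- A pivotal category: a monoidal category in which every object is equipped with a dual
object and with evaluation/coevaluation morphisms forming a left duality and a right
duality, such that left and right duals of morphisms coincide, the left and right
monoidal constraints coincide, and the left and right evaluations of the unit coincide. -/
class PivotalCat (C : Type u) [Category.{v} C] [MonoidalCategory C] where
  dual : C → C
  evl : ∀ X : C, dual X ⊗ X ⟶ 𝟙_ C
  coevl : ∀ X : C, 𝟙_ C ⟶ X ⊗ dual X
  evr : ∀ X : C, X ⊗ dual X ⟶ 𝟙_ C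
  coevr : ∀ X : C, 𝟙_ C ⟶ dual X ⊗ X
  left_zigzag₁ : ∀ X : C,
    (λ_ X).inv ≫ (coevl X ▷ X) ≫ (α_ X (dual X) X).hom ≫ (X ◁ evl X) ≫ (ρ_ X).hom = 𝟙 X
  left_zigzag₂ : ∀ X : C,
    (ρ_ (dual X)).inv ≫ (dual X ◁ coevl X) ≫ (α_ (dual X) X (dual X)).inv ≫
      (evl X ▷ dual X) ≫ (λ_ (dual X)).hom = 𝟙 (dual X)
  right_zigzag₁ : ∀ X : C,
    (ρ_ X).inv ≫ (X ◁ coevr X) ≫ (α_ X (dual X) X).inv ≫ (evr X ▷ X) ≫ (λ_ X).hom = 𝟙 X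
  right_zigzag₂ : ∀ X : C,
    (λ_ (dual X)).inv ≫ (coevr X ▷ dual X) ≫ (α_ (dual X) X (dual X)).hom ≫
      (dual X ◁ evr X) ≫ (ρ_ (dual X)).hom = 𝟙 (dual X)
  ldual_eq_rdual : ∀ {X Y : C} (f : X ⟶ Y),
    (ρ_ (dual Y)).inv ≫ (dual Y ◁ coevl X) ≫ (dual Y ◁ (f ▷ dual X)) ≫
      (α_ (dual Y) Y (dual X)).inv ≫ (evl Y ▷ dual X) ≫ (λ_ (dual X)).hom =
    (λ_ (dual Y)).inv ≫ (coevr X ▷ dual Y) ≫ ((dual X ◁ f) ▷ dual Y) ≫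
      (α_ (dual X) Y (dual Y)).hom ≫ (dual X ◁ evr Y) ≫ (ρ_ (dual X)).hom
  constraint_eq : ∀ X Y : C,
    (ρ_ (dual X ⊗ dual Y)).inv ≫ ((dual X ⊗ dual Y) ◁ coevl (Y ⊗ X)) ≫
      (α_ (dual X) (dual Y) ((Y ⊗ X) ⊗ dual (Y ⊗ X))).hom ≫
      (dual X ◁ (α_ (dual Y) (Y ⊗ X) (dual (Y ⊗ X))).inv) ≫
      (dual X ◁ (((α_ (dual Y) Y X).inv ≫ (evl Y ▷ X) ≫ (λ_ X).hom) ▷ dual (Y ⊗ X))) ≫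
      (α_ (dual X) X (dual (Y ⊗ X))).inv ≫ (evl X ▷ dual (Y ⊗ X)) ≫ (λ_ (dual (Y ⊗ X))).hom =
    (λ_ (dual X ⊗ dual Y)).inv ≫ (coevr (Y ⊗ X) ▷ (dual X ⊗ dual Y)) ≫
      (α_ (dual (Y ⊗ X)) (Y ⊗ X) (dual X ⊗ dual Y)).hom ≫
      (dual (Y ⊗ X) ◁ ((α_ Y X (dual X ⊗ dual Y)).hom ≫ (Y ◁ (α_ X (dual X) (dual Y)).inv) ≫
        (Y ◁ (evr X ▷ dual Y)) ≫ (Y ◁ (λ_ (dual Y)).hom) ≫ evr Y)) ≫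
      (ρ_ (dual (Y ⊗ X))).hom
  ev_unit : (ρ_ (dual (𝟙_ C))).inv ≫ evl (𝟙_ C) = (λ_ (dual (𝟙_ C))).inv ≫ evr (𝟙_ C)

namespace PivotalCat

variable {C : Type u} [Category.{v} C] [MonoidalCategory C] [PivotalCat C]

/-- The (common left = right) dual of a morphism. -/
def pdual {X Y : C} (f : X ⟶ Y) : dual Y ⟶ dual X :=
  (ρ_ (dual Y)).inv ≫ (dual Y ◁ coevl X) ≫ (dual Y ◁ (f ▷ dual X)) ≫
    (α_ (dual Y) Y (dual X)).inv ≫ (evl Y ▷ dual X) ≫ (λ_ (dual X)).hom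

/-- The (common left = right) pivotal monoidal constraint `X* ⊗ Y* ⟶ (Y ⊗ X)*`. -/
def mcon (X Y : C) : dual X ⊗ dual Y ⟶ dual (Y ⊗ X) :=
  (ρ_ (dual X ⊗ dual Y)).inv ≫ ((dual X ⊗ dual Y) ◁ coevl (Y ⊗ X)) ≫
    (α_ (dual X) (dual Y) ((Y ⊗ X) ⊗ dual (Y ⊗ X))).hom ≫
    (dual X ◁ (α_ (dual Y) (Y ⊗ X) (dual (Y ⊗ X))).inv) ≫
    (dual X ◁ (((α_ (dual Y) Y X).inv ≫ (evl Y ▷ X) ≫ (λ_ X).hom) ▷ dual (Y ⊗ X))) ≫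
    (α_ (dual X) X (dual (Y ⊗ X))).inv ≫ (evl X ▷ dual (Y ⊗ X)) ≫ (λ_ (dual (Y ⊗ X))).hom

/-- The left trace of an endomorphism. -/
def trl {X : C} (f : X ⟶ X) : 𝟙_ C ⟶ 𝟙_ C := coevr X ≫ (dual X ◁ f) ≫ evl X

/-- The right trace of an endomorphism. -/
def trr {X : C} (f : X ⟶ X) : 𝟙_ C ⟶ 𝟙_ C := coevl X ≫ (f ▷ dual X) ≫ evr X

/-- The left dimension of an object, as an endomorphism of the unit. -/
def diml (X : C) : 𝟙_ C ⟶ 𝟙_ C := trl (𝟙 X)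

/-- The right dimension of an object, as an endomorphism of the unit. -/
def dimr (X : C) : 𝟙_ C ⟶ 𝟙_ C := trr (𝟙 X)

/-- The permutation map `σ_{X,Y} : Hom(𝟙, X ⊗ Y) → Hom(𝟙, Y ⊗ X)`,
`α ↦ (ev_l X ⊗ id_{Y⊗X}) ∘ (id_{X*} ⊗ α ⊗ id_X) ∘ coev_r X`. -/
def sigmaMap (X Y : C) (a : 𝟙_ C ⟶ X ⊗ Y) : 𝟙_ C ⟶ Y ⊗ X :=
  coevr X ≫ (dual X ◁ (λ_ X).inv) ≫ (dual X ◁ (a ▷ X)) ≫ (dual X ◁ (α_ X Y X).hom) ≫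
    (α_ (dual X) X (Y ⊗ X)).inv ≫ (evl X ▷ (Y ⊗ X)) ≫ (λ_ (Y ⊗ X)).hom

end PivotalCat

/-- A pivotal category is spherical when left and right traces coincide. -/
class SphericalCat (C : Type u) [Category.{v} C] [MonoidalCategory C] [PivotalCat C] : Prop where
  tr_eq : ∀ {X : C} (f : X ⟶ X), PivotalCat.trl f = PivotalCat.trr f
/-- An object `X` of a `k`-linear category is simple if `λ ↦ λ • id_X` is a bijection
`k → End X`. -/
def IsSimpleObj (k : Type w) [CommRing k] {C : Type u} [Category.{v} C]
    [Preadditive C] [CategoryTheory.Linear k C] (X : C) : Prop :=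
  Function.Bijective fun a : k => a • 𝟙 X

/-- A monoidal `k`-category: the hom-sets are `k`-modules, composition and the monoidal
product are `k`-bilinear (all this is encoded in the instance parameters), and
`End(𝟙)` is free of rank one via `λ ↦ λ • id`. -/
class MonoidalKCat (k : Type w) [CommRing k] (C : Type u) [Category.{v} C]
    [Preadditive C] [CategoryTheory.Linear k C] [MonoidalCategory C]
    [MonoidalPreadditive C] [CategoryTheory.MonoidalLinear k C] : Prop where
  unit_free : Function.Bijective fun a : k => a • 𝟙 (𝟙_ C)

/-- The identification `End(𝟙) = k` of a monoidal `k`-category. -/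
noncomputable def toScalar (k : Type w) [CommRing k] {C : Type u} [Category.{v} C]
    [Preadditive C] [CategoryTheory.Linear k C] [MonoidalCategory C]
    [MonoidalPreadditive C] [CategoryTheory.MonoidalLinear k C] [MonoidalKCat k C]
    (f : 𝟙_ C ⟶ 𝟙_ C) : k :=
  (Equiv.ofBijective (fun a : k => a • 𝟙 (𝟙_ C))
    (MonoidalKCat.unit_free (k := k) (C := C))).symm f

/-- The left dimension of an object as an element of `k`. -/
noncomputable def sdiml (k : Type w) [CommRing k] {C : Type u} [Category.{v} C]
    [Preadditive C] [CategoryTheory.Linear k C] [MonoidalCategory C]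
    [MonoidalPreadditive C] [CategoryTheory.MonoidalLinear k C] [PivotalCat C]
    [MonoidalKCat k C] (X : C) : k :=
  toScalar k (PivotalCat.diml X)

/-- The right dimension of an object as an element of `k`. -/
noncomputable def sdimr (k : Type w) [CommRing k] {C : Type u} [Category.{v} C]
    [Preadditive C] [CategoryTheory.Linear k C] [MonoidalCategory C]
    [MonoidalPreadditive C] [CategoryTheory.MonoidalLinear k C] [PivotalCat C]
    [MonoidalKCat k C] (X : C) : k :=
  toScalar k (PivotalCat.dimr X)

/-- A pre-fusion category over `k`: a pivotal `k`-category in which every finite family of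
objects has a direct sum, every object is a finite direct sum of simple objects, and there
are no nonzero morphisms between non-isomorphic simple objects. -/
class PreFusionCat (k : Type w) [CommRing k] (C : Type u) [Category.{v} C]
    [Preadditive C] [CategoryTheory.Linear k C] [MonoidalCategory C]
    [MonoidalPreadditive C] [CategoryTheory.MonoidalLinear k C]
    [CategoryTheory.Limits.HasFiniteBiproducts C] [PivotalCat C] [MonoidalKCat k C] : Prop where
  semisimple : ∀ X : C, ∃ (n : ℕ) (obj : Fin n → C) (p : ∀ a, X ⟶ obj a) (q : ∀ a, obj a ⟶ X),
    (∀ a, IsSimpleObj k (obj a)) ∧ (∑ a, p a ≫ q a = 𝟙 X) ∧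
    (∀ a, q a ≫ p a = 𝟙 (obj a)) ∧ (∀ a b, a ≠ b → q a ≫ p b = 0)
  simple_hom_zero : ∀ {i j : C}, IsSimpleObj k i → IsSimpleObj k j →
    IsEmpty (i ≅ j) → ∀ f : i ⟶ j, f = 0

/-- A fusion category over `k`: a pre-fusion category with finitely many isomorphism
classes of simple objects. -/
class FusionCat (k : Type w) [CommRing k] (C : Type u) [Category.{v} C]
    [Preadditive C] [CategoryTheory.Linear k C] [MonoidalCategory C]
    [MonoidalPreadditive C] [CategoryTheory.MonoidalLinear k C]
    [CategoryTheory.Limits.HasFiniteBiproducts C] [PivotalCat C] [MonoidalKCat k C]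
    [PreFusionCat k C] : Prop where
  finitely_many_simples : ∃ S : Set C, S.Finite ∧
    ∀ i : C, IsSimpleObj k i → ∃ j ∈ S, Nonempty (i ≅ j)

/-- A representative set of simple objects: it contains the unit object, consists of simple
objects, and every simple object is isomorphic to exactly one of its elements. -/
def IsRepresentativeSet (k : Type w) [CommRing k] (C : Type u) [Category.{v} C]
    [Preadditive C] [CategoryTheory.Linear k C] [MonoidalCategory C] (I : Set C) : Prop :=
  (𝟙_ C) ∈ I ∧ (∀ i ∈ I, IsSimpleObj k i) ∧
    ∀ X : C, IsSimpleObj k X → ∃! i, i ∈ I ∧ Nonempty (X ≅ i)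

/-- The dimension of a fusion category with (finite) representative set `I` of simple
objects: `dim C = ∑_{i ∈ I} dim_l(i) · dim_r(i)`. -/
noncomputable def catDim (k : Type w) [CommRing k] {C : Type u} [Category.{v} C]
    [Preadditive C] [CategoryTheory.Linear k C] [MonoidalCategory C]
    [MonoidalPreadditive C] [CategoryTheory.MonoidalLinear k C] [PivotalCat C]
    [MonoidalKCat k C] (I : Finset C) : k :=
  ∑ i ∈ I, sdiml k i * sdimr k i

/-!
Writing `F(Y₁, Y₂) = T(Y₁)* ⊗ X ⊗ Y₂`, the identity `id_Y = ∑_β q_β p_β` shows that a dinatural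
transformation from `F` is determined by its components at the objects of `I`, and that a family
of components on `I` extends to all of `C` as soon as it is dinatural with respect to the
morphisms between objects of `I`. These morphisms are zero or scalar multiples of identities, so
for a `k`-bilinear `F` every family is dinatural on `I`. Dinatural transformations from `F` to
`Z₀` are therefore the same as families `F(i, i) ⟶ Z₀`, that is, morphisms `⊕ᵢ F(i, i) ⟶ Z₀`.
-/

open Opposite

universe v' u' w'

section Decompositions

variable {C : Type u} [Category.{v} C] {D : Type u'} [Category.{v'} D] {ι : Type w'}

/-- Dinaturality of a family of morphisms `e i : F(S i, S i) ⟶ Z` with respect to the morphisms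
between the objects of the family `S`. -/
def IsDinaturalOn (F : Cᵒᵖ ⥤ C ⥤ D) (S : ι → C) {Z : D}
    (e : ∀ i, (F.obj (op (S i))).obj (S i) ⟶ Z) : Prop :=
  ∀ ⦃i j : ι⦄ (g : S i ⟶ S j), (F.map g.op).app (S i) ≫ e i = (F.obj (op (S j))).map g ≫ e j

variable [Preadditive C]

/-- A decomposition of the identity of `Y` into finitely many morphisms factoring through objects
of the family `S`. The `I`-partitions of `Y` are those for `S` the inclusion of `I` which satisfy
in addition the orthogonality relations `p_β q_γ = δ_{β,γ}`. -/
structure IdentityDecomposition (S : ι → C) (Y : C) where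
  size : ℕ
  index : Fin size → ι
  proj : ∀ b, Y ⟶ S (index b)
  incl : ∀ b, S (index b) ⟶ Y
  sum_proj_incl : ∑ b, proj b ≫ incl b = 𝟙 Y

namespace IdentityDecomposition

variable [Preadditive D] {S : ι → C} {Y : C}

lemma sum_map_proj_map_incl (P : IdentityDecomposition S Y) (G : C ⥤ D) [G.Additive] :
    ∑ b, G.map (P.proj b) ≫ G.map (P.incl b) = 𝟙 (G.obj Y) := by
  simp only [← G.map_comp, ← G.map_sum, P.sum_proj_incl, G.map_id]

lemma sum_map_incl_op_map_proj_op (P : IdentityDecomposition S Y) (G : Cᵒᵖ ⥤ D) [G.Additive] :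
    ∑ b, G.map (P.incl b).op ≫ G.map (P.proj b).op = 𝟙 (G.obj (op Y)) := by
  simp only [← G.map_comp, ← op_comp, ← G.map_sum, ← op_sum, P.sum_proj_incl, op_id, G.map_id]

/-- The extension to `Y` of a family of morphisms `e i : F(S i, S i) ⟶ Z`, given by
`∑_b e_b ∘ F(incl b, proj b)`. -/
def extend (P : IdentityDecomposition S Y) (F : Cᵒᵖ ⥤ C ⥤ D) {Z : D}
    (e : ∀ i, (F.obj (op (S i))).obj (S i) ⟶ Z) : (F.obj (op Y)).obj Y ⟶ Z :=
  ∑ b, (F.obj (op Y)).map (P.proj b) ≫ (F.map (P.incl b).op).app (S (P.index b)) ≫ e (P.index b)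

variable {F : Cᵒᵖ ⥤ C ⥤ D} {Z : D}

lemma extend_comp (P : IdentityDecomposition S Y) (e : ∀ i, (F.obj (op (S i))).obj (S i) ⟶ Z)
    {Z' : D} (φ : Z ⟶ Z') : P.extend F e ≫ φ = P.extend F fun i => e i ≫ φ := by
  simp only [extend, Preadditive.sum_comp, Category.assoc]

lemma extend_eq_of_dinatural [∀ Y, (F.obj Y).Additive] (P : IdentityDecomposition S Y)
    {d : ∀ Y, (F.obj (op Y)).obj Y ⟶ Z} (hd : IsDinaturalOn F id d) :
    P.extend F (fun i => d (S i)) = d Y := by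
  have hd' (b) : (F.map (P.incl b).op).app _ ≫ d (S (P.index b)) =
      (F.obj (op Y)).map (P.incl b) ≫ d Y := hd (P.incl b)
  simp only [extend, hd', ← Category.assoc, ← Preadditive.sum_comp,
    P.sum_map_proj_map_incl (F.obj (op Y)), Category.id_comp]

variable {c : Cofan fun i => (F.obj (op (S i))).obj (S i)}

lemma extend_inj_comp_desc [∀ Y, (F.obj Y).Additive] (hc : IsColimit c)
    (P : IdentityDecomposition S Y) {d : ∀ Y, (F.obj (op Y)).obj Y ⟶ Z}
    (hd : IsDinaturalOn F id d) :
    P.extend F c.inj ≫ Cofan.IsColimit.desc hc (fun i => d (S i)) = d Y := by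
  simp only [extend_comp, Cofan.IsColimit.fac, P.extend_eq_of_dinatural hd]

variable [F.Additive] {e : ∀ i, (F.obj (op (S i))).obj (S i) ⟶ Z}

lemma map_op_app_comp_eq_map_comp_extend (he : IsDinaturalOn F S e)
    (P : IdentityDecomposition S Y) {i : ι} (g : S i ⟶ Y) :
    (F.map g.op).app (S i) ≫ e i = (F.obj (op Y)).map g ≫ P.extend F e := by
  have hsum : ∑ b, (F.map (P.incl b).op).app (S i) ≫ (F.map (P.proj b).op).app (S i) =
      𝟙 ((F.obj (op Y)).obj (S i)) :=
    P.sum_map_incl_op_map_proj_op (F ⋙ (evaluation C D).obj (S i))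
  calc (F.map g.op).app (S i) ≫ e i
      = ∑ b, (F.map (P.incl b).op).app (S i) ≫ (F.map (g ≫ P.proj b).op).app (S i) ≫ e i := by
        rw [← Category.id_comp ((F.map g.op).app (S i)), ← hsum]
        simp only [Preadditive.sum_comp, Category.assoc, op_comp, F.map_comp, NatTrans.comp_app]
    _ = (F.obj (op Y)).map g ≫ P.extend F e := by
        simp only [he _, extend, Preadditive.comp_sum, Functor.map_comp, Category.assoc,
          NatTrans.naturality_assoc]

lemma extend_eq_of_index (he : IsDinaturalOn F S e) {i : ι}
    (P : IdentityDecomposition S (S i)) : P.extend F e = e i := by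
  simpa using (map_op_app_comp_eq_map_comp_extend he P (𝟙 (S i))).symm

lemma hom_ext_of_extend_inj_comp_eq (hc : IsColimit c) (hinj : IsDinaturalOn F S c.inj)
    (P : ∀ Y, IdentityDecomposition S Y) {φ ψ : c.pt ⟶ Z}
    (h : ∀ Y, (P Y).extend F c.inj ≫ φ = (P Y).extend F c.inj ≫ ψ) : φ = ψ :=
  Cofan.IsColimit.hom_ext hc _ _ fun i => by
    simpa only [extend_eq_of_index hinj] using h (S i)

variable [∀ Y, (F.obj Y).Additive]

lemma extend_dinatural (he : IsDinaturalOn F S e)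
    {Y' : C} (P : IdentityDecomposition S Y) (P' : IdentityDecomposition S Y') (f : Y ⟶ Y') :
    (F.map f.op).app Y ≫ P.extend F e = (F.obj (op Y')).map f ≫ P'.extend F e := by
  calc (F.map f.op).app Y ≫ P.extend F e
      = ∑ b, (F.obj (op Y')).map (P.proj b) ≫
          (F.map (P.incl b ≫ f).op).app (S (P.index b)) ≫ e (P.index b) := by
        simp only [extend, Preadditive.comp_sum, op_comp, Functor.map_comp, NatTrans.comp_app,
          Category.assoc, NatTrans.naturality_assoc]
    _ = (∑ b, (F.obj (op Y')).map (P.proj b) ≫ (F.obj (op Y')).map (P.incl b)) ≫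
          (F.obj (op Y')).map f ≫ P'.extend F e := by
        simp only [map_op_app_comp_eq_map_comp_extend he P', Functor.map_comp, Category.assoc,
          Preadditive.sum_comp]
    _ = (F.obj (op Y')).map f ≫ P'.extend F e := by
        rw [P.sum_map_proj_map_incl (F.obj (op Y')), Category.id_comp]

/-- The cowedge on `F` extending a family of morphisms which is dinatural on the objects of `S`. -/
def cowedge (P : ∀ Y, IdentityDecomposition S Y) (he : IsDinaturalOn F S e) : Cowedge F :=
  Cowedge.mk Z (fun Y => (P Y).extend F e) fun _ _ f => extend_dinatural he (P _) (P _) f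

/-- The cowedge extending the inclusions of a coproduct of the objects `F(S i, S i)` exhibits that
coproduct as a coend of `F`. -/
def isColimitCowedge (P : ∀ Y, IdentityDecomposition S Y) (hc : IsColimit c)
    (hinj : IsDinaturalOn F S c.inj) : IsColimit (cowedge P hinj) :=
  have fac (t : Cowedge F) (Y : C) :
      (P Y).extend F c.inj ≫ Cofan.IsColimit.desc hc (fun i => t.π (S i)) = t.π Y :=
    extend_inj_comp_desc hc (P Y) fun _ _ f => Cowedge.condition t f
  Multicofork.IsColimit.mk _ (fun t => Cofan.IsColimit.desc hc fun i => t.π (S i)) fac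
    fun t _ hφ => hom_ext_of_extend_inj_comp_eq hc hinj P fun Y => (hφ Y).trans (fac t Y).symm

end IdentityDecomposition

end Decompositions

section LinearBifunctors

variable (k : Type w) [Semiring k] {C : Type u} [Category.{v} C] [Preadditive C]
  [CategoryTheory.Linear k C] {ι : Type w'}

/-- A family of objects satisfying the conclusion of Schur's lemma: there are no nonzero morphisms
between distinct members, and the endomorphisms of each member are scalars. The scalar need not be
unique. -/
structure IsSchurFamily (S : ι → C) : Prop where
  eq_zero_of_ne : ∀ ⦃i j : ι⦄, i ≠ j → ∀ g : S i ⟶ S j, g = 0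
  exists_smul_id_eq : ∀ (i : ι) (g : S i ⟶ S i), ∃ a : k, a • 𝟙 (S i) = g

variable {k}

lemma IsSchurFamily.isDinaturalOn {D : Type u'} [Category.{v'} D] [Preadditive D]
    [CategoryTheory.Linear k D] {F : Cᵒᵖ ⥤ C ⥤ D} [F.Additive] [∀ Y, (F.obj Y).Additive]
    [∀ Y, (F.obj Y).Linear k] {S : ι → C} (hS : IsSchurFamily k S)
    (hF : ∀ ⦃Y Y' : C⦄ (a : k) (f : Y ⟶ Y'), F.map (a • f).op = a • F.map f.op)
    {Z : D} (e : ∀ i, (F.obj (op (S i))).obj (S i) ⟶ Z) : IsDinaturalOn F S e := by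
  intro i j g
  obtain rfl | hij := eq_or_ne i j
  · obtain ⟨a, rfl⟩ := hS.exists_smul_id_eq i g
    simp [hF]
  · simp [hS.eq_zero_of_ne hij g]

end LinearBifunctors

lemma isDinaturalOn_and_existsUnique_of_isColimit {C : Type u} [Category.{v} C] {D : Type u'}
    [Category.{v'} D] {F : Cᵒᵖ ⥤ C ⥤ D} {c : Cowedge F} (hc : IsColimit c) :
    IsDinaturalOn F id (fun Y => c.π Y) ∧
      ∀ (Z : D) (d : ∀ Y, (F.obj (op Y)).obj Y ⟶ Z), IsDinaturalOn F id d →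
        ∃! φ : c.pt ⟶ Z, ∀ Y : C, c.π Y ≫ φ = d Y :=
  ⟨fun _ _ f => Cowedge.condition c f, fun _ d hd =>
    ⟨Cowedge.IsColimit.desc hc d hd, Cowedge.IsColimit.π_desc hc d hd, fun _ hφ =>
      Cowedge.IsColimit.hom_ext hc fun Y =>
        (hφ Y).trans (Cowedge.IsColimit.π_desc hc d hd Y).symm⟩⟩

namespace PivotalCat

variable {C : Type u} [Category.{v} C] [MonoidalCategory C] [PivotalCat C]

/-- The left duality of a pivotal category. In Mathlib's terms `dual X` is a *right* dual of `X`. -/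
abbrev exactPairing (X : C) : ExactPairing X (dual X) where
  coevaluation' := coevl X
  evaluation' := evl X
  coevaluation_evaluation' := by
    have h := left_zigzag₂ X
    rw [Iso.inv_comp_eq, Category.comp_id] at h
    simp [← h]
  evaluation_coevaluation' := by
    have h := left_zigzag₁ X
    rw [Iso.inv_comp_eq, Category.comp_id] at h
    simp [← h]

/-- `dual X` as Mathlib's right dual; it makes `pdual` the right adjoint mate. -/
abbrev hasRightDual (X : C) : HasRightDual X :=
  letI := exactPairing X
  ⟨dual X⟩

lemma pdual_id (X : C) : pdual (𝟙 X) = 𝟙 (dual X) :=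
  letI := hasRightDual X
  rightAdjointMate_id (X := X)

lemma pdual_comp {X Y Z : C} (f : X ⟶ Y) (g : Y ⟶ Z) : pdual (f ≫ g) = pdual g ≫ pdual f :=
  letI := hasRightDual X
  letI := hasRightDual Y
  letI := hasRightDual Z
  comp_rightAdjointMate (f := f) (g := g)

lemma pdual_add [Preadditive C] [MonoidalPreadditive C] {X Y : C} (f g : X ⟶ Y) :
    pdual (f + g) = pdual f + pdual g := by
  simp [pdual]

lemma pdual_smul {k : Type w} [Semiring k] [Preadditive C] [CategoryTheory.Linear k C]
    [MonoidalPreadditive C] [MonoidalLinear k C] {X Y : C} (a : k) (f : X ⟶ Y) :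
    pdual (a • f) = a • pdual f := by
  simp [pdual]

/-- The bifunctor `(Y₁, Y₂) ↦ T(Y₁)* ⊗ X ⊗ Y₂`, whose coend is `Z_T(X)`. -/
def centralizerBifunctor (T : C ⥤ C) (X : C) : Cᵒᵖ ⥤ C ⥤ C where
  obj Y := tensorLeft X ⋙ tensorLeft (dual (T.obj Y.unop))
  map f := { app := fun Z => pdual (T.map f.unop) ▷ (X ⊗ Z)
             naturality := fun _ _ g => whisker_exchange _ (X ◁ g) }
  map_id Y := by ext Z; simp [pdual_id]
  map_comp f g := by ext Z; simp [pdual_comp]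

section Linearity

variable [Preadditive C] [MonoidalPreadditive C] (T : C ⥤ C) (X : C)

instance [T.Additive] : (centralizerBifunctor T X).Additive where
  map_add {_ _ f g} := by
    ext Z
    change pdual (T.map (f.unop + g.unop)) ▷ (X ⊗ Z) =
      pdual (T.map f.unop) ▷ (X ⊗ Z) + pdual (T.map g.unop) ▷ (X ⊗ Z)
    rw [T.map_add, pdual_add, MonoidalPreadditive.add_whiskerRight]

instance (Y : Cᵒᵖ) : ((centralizerBifunctor T X).obj Y).Additive :=
  inferInstanceAs (tensorLeft X ⋙ tensorLeft (dual (T.obj Y.unop))).Additive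

variable {k : Type w} [Semiring k] [CategoryTheory.Linear k C] [MonoidalLinear k C]

instance (Y : Cᵒᵖ) : ((centralizerBifunctor T X).obj Y).Linear k :=
  inferInstanceAs ((tensorLeft X ⋙ tensorLeft (dual (T.obj Y.unop))).Linear k)

lemma centralizerBifunctor_map_smul_op [T.Linear k] {Y Y' : C} (a : k) (f : Y ⟶ Y') :
    (centralizerBifunctor T X).map (a • f).op = a • (centralizerBifunctor T X).map f.op := by
  ext Z
  change pdual (T.map (a • f)) ▷ (X ⊗ Z) = a • pdual (T.map f) ▷ (X ⊗ Z)
  rw [T.map_smul, pdual_smul, MonoidalLinear.smul_whiskerRight]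

end Linearity

lemma extend_centralizerBifunctor [Preadditive C] (T : C ⥤ C) (X : C) {ι : Type w'} {S : ι → C}
    {Y Z : C} (P : IdentityDecomposition S Y)
    (e : ∀ i, dual (T.obj (S i)) ⊗ (X ⊗ S i) ⟶ Z) :
    P.extend (centralizerBifunctor T X) e =
      ∑ b, (pdual (T.map (P.incl b)) ⊗ₘ (𝟙 X ⊗ₘ P.proj b)) ≫ e (P.index b) := by
  refine Finset.sum_congr rfl fun b _ => ?_
  rw [id_tensorHom, tensorHom_def', Category.assoc]
  rfl

end PivotalCat

section Representatives

variable {k : Type w} [CommRing k] {C : Type u} [Category.{v} C] [Preadditive C]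
  [CategoryTheory.Linear k C] [MonoidalCategory C]

lemma IsRepresentativeSet.eq_of_iso {I : Set C} (hI : IsRepresentativeSet k C I) {i j : C}
    (hi : i ∈ I) (hj : j ∈ I) (φ : i ≅ j) : i = j :=
  (hI.2.2 i (hI.2.1 i hi)).unique ⟨hi, ⟨Iso.refl i⟩⟩ ⟨hj, ⟨φ⟩⟩

lemma IsRepresentativeSet.isSchurFamily [MonoidalPreadditive C] [MonoidalLinear k C]
    [HasFiniteBiproducts C] [PivotalCat C] [MonoidalKCat k C] [PreFusionCat k C] {I : Set C}
    (hI : IsRepresentativeSet k C I) : IsSchurFamily k (Subtype.val : I → C) where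
  eq_zero_of_ne i j hij := PreFusionCat.simple_hom_zero (hI.2.1 i i.2) (hI.2.1 j j.2)
    ⟨fun φ => hij (Subtype.ext (hI.eq_of_iso i.2 j.2 φ))⟩
  exists_smul_id_eq i := (hI.2.1 i i.2).2

end Representatives

open PivotalCat in
theorem fusion_functor_centralizable_general {k : Type w} [Semiring k] {C : Type u}
    [Category.{v} C] [Preadditive C] [CategoryTheory.Linear k C] [MonoidalCategory C]
    [MonoidalPreadditive C] [MonoidalLinear k C] [PivotalCat C] {ι : Type w'} {S : ι → C}
    (hS : IsSchurFamily k S) (P : ∀ Y, IdentityDecomposition S Y)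
    (T : C ⥤ C) [T.Additive] [T.Linear k] (X : C)
    {c : Cofan fun i => dual (T.obj (S i)) ⊗ (X ⊗ S i)} (hc : IsColimit c) :
    (∀ ⦃Y Y' : C⦄ (f : Y ⟶ Y'),
      (pdual (T.map f) ▷ (X ⊗ Y)) ≫
          (∑ b, (pdual (T.map ((P Y).incl b)) ⊗ₘ (𝟙 X ⊗ₘ (P Y).proj b)) ≫
            c.inj ((P Y).index b)) =
        (dual (T.obj Y') ◁ (X ◁ f)) ≫
          (∑ b, (pdual (T.map ((P Y').incl b)) ⊗ₘ (𝟙 X ⊗ₘ (P Y').proj b)) ≫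
            c.inj ((P Y').index b))) ∧
    ∀ (Z₀ : C) (d : ∀ Y : C, dual (T.obj Y) ⊗ (X ⊗ Y) ⟶ Z₀),
      (∀ ⦃Y Y' : C⦄ (f : Y ⟶ Y'),
        (pdual (T.map f) ▷ (X ⊗ Y)) ≫ d Y = (dual (T.obj Y') ◁ (X ◁ f)) ≫ d Y') →
      ∃! φ : c.pt ⟶ Z₀, ∀ Y : C,
        (∑ b, (pdual (T.map ((P Y).incl b)) ⊗ₘ (𝟙 X ⊗ₘ (P Y).proj b)) ≫
          c.inj ((P Y).index b)) ≫ φ = d Y := by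
  have hinj : IsDinaturalOn (centralizerBifunctor T X) S c.inj :=
    hS.isDinaturalOn (fun _ _ => centralizerBifunctor_map_smul_op T X) c.inj
  simp only [← extend_centralizerBifunctor]
  exact isDinaturalOn_and_existsUnique_of_isColimit
    (IdentityDecomposition.isColimitCowedge P hc hinj)

open PivotalCat in
/-- Section 12.2: every `k`-linear endofunctor `T` of a fusion category `C` over `k` is
centralizable: for every object `X`, the functor `(Y₁, Y₂) ↦ T(Y₁)* ⊗ X ⊗ Y₂` has a coend
`Z_T(X) = ⊕_{i ∈ I} T(i)* ⊗ X ⊗ i`, whose universal dinatural transformation is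
`ρ_{X,Y} = ∑_β ι_{i_β} ∘ (T(q_Y^β)* ⊗ id_X ⊗ p_Y^β)` for any `I`-partition
`(p_Y^β, q_Y^β)` of `Y`. -/
theorem fusion_functor_centralizable (k : Type w) [CommRing k] (C : Type u)
    [Category.{v} C] [Preadditive C] [CategoryTheory.Linear k C] [MonoidalCategory C]
    [MonoidalPreadditive C] [CategoryTheory.MonoidalLinear k C]
    [CategoryTheory.Limits.HasFiniteBiproducts C] [PivotalCat C] [MonoidalKCat k C]
    [PreFusionCat k C] [FusionCat k C]
    (I : Finset C) (hI : IsRepresentativeSet k C ↑I)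
    (T : C ⥤ C) [T.Additive] [CategoryTheory.Functor.Linear k T]
    -- a choice of `I`-partitions of all objects of `C`:
    (n : C → ℕ) (obj : ∀ Y : C, Fin (n Y) → C)
    (p : ∀ (Y : C) (b : Fin (n Y)), Y ⟶ obj Y b)
    (q : ∀ (Y : C) (b : Fin (n Y)), obj Y b ⟶ Y)
    (hmem : ∀ Y b, obj Y b ∈ I)
    (hsum : ∀ Y, ∑ b, p Y b ≫ q Y b = 𝟙 Y)
    (hqp : ∀ Y b, q Y b ≫ p Y b = 𝟙 (obj Y b))
    (horth : ∀ Y b b', b ≠ b' → q Y b ≫ p Y b' = 0)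
    (X : C) :
    -- the transformation `ρ_{X,-}` to `Z_T(X) = ⊕_{i ∈ I} T(i)* ⊗ X ⊗ i` is dinatural:
    (∀ {Y Y' : C} (f : Y ⟶ Y'),
      (pdual (T.map f) ▷ (X ⊗ Y)) ≫
          (∑ b, (pdual (T.map (q Y b)) ⊗ₘ (𝟙 X ⊗ₘ p Y b)) ≫
            biproduct.ι (fun i : ↥I => dual (T.obj i.1) ⊗ (X ⊗ i.1)) ⟨obj Y b, hmem Y b⟩) =
        (dual (T.obj Y') ◁ (X ◁ f)) ≫
          (∑ b, (pdual (T.map (q Y' b)) ⊗ₘ (𝟙 X ⊗ₘ p Y' b)) ≫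
            biproduct.ι (fun i : ↥I => dual (T.obj i.1) ⊗ (X ⊗ i.1))
              ⟨obj Y' b, hmem Y' b⟩)) ∧
    -- and it is universal among dinatural transformations:
    ∀ (Z₀ : C) (d : ∀ Y : C, dual (T.obj Y) ⊗ (X ⊗ Y) ⟶ Z₀),
      (∀ {Y Y' : C} (f : Y ⟶ Y'),
        (pdual (T.map f) ▷ (X ⊗ Y)) ≫ d Y = (dual (T.obj Y') ◁ (X ◁ f)) ≫ d Y') →
      ∃! φ : (⨁ fun i : ↥I => dual (T.obj i.1) ⊗ (X ⊗ i.1)) ⟶ Z₀,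
        ∀ Y : C,
          (∑ b, (pdual (T.map (q Y b)) ⊗ₘ (𝟙 X ⊗ₘ p Y b)) ≫
              biproduct.ι (fun i : ↥I => dual (T.obj i.1) ⊗ (X ⊗ i.1))
                ⟨obj Y b, hmem Y b⟩) ≫ φ = d Y :=
  fusion_functor_centralizable_general hI.isSchurFamily
    (fun Y => ⟨n Y, fun b => ⟨obj Y b, hmem Y b⟩, p Y, q Y, hsum Y⟩) T X (biproduct.isColimit _)
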